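/- Let J ⊆ T with |J| ≥ 2. Then for all s with Re(s_{ij}) > 0 for all i,j ∈ J, L₀(s;J) = Σ_{ā∈R(J)} |Ā(ā)| · p^{−|J| − Σ_{(i,j)∈K(ā)} s_{ij}} · L₁(s; K_list(ā), K(ā)) + |Δ̄(J)| · p^{−|J|}, where R(J) is a set of representatives of the equivalence classes Ā(ā) of the relation ā ∼ b̄ ⟺ K(ā) = K(b̄) on (𝔽_p^×)^{|J|} ∖ Δ̄(J). -/

import Mathlib

open MeasureTheory Finset

noncomputable section

instance padicMS (p : ℕ) [Fact p.Prime] : MeasurableSpace ℚ_[p] := borel _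
instance padicBS (p : ℕ) [Fact p.Prime] : BorelSpace ℚ_[p] := ⟨rfl⟩

/-- The closed unit ball of `ℚ_[p]` (i.e. `ℤ_[p]`) as a positive compact subset. -/
def padicBall (p : ℕ) [Fact p.Prime] : TopologicalSpace.PositiveCompacts ℚ_[p] where
  carrier := Metric.closedBall 0 1
  isCompact' := isCompact_closedBall 0 1
  interior_nonempty' := ⟨0, Metric.ball_subset_interior_closedBall (Metric.mem_ball_self one_pos)⟩

/-- The Haar measure on `(ℚ_[p], +)`, normalized so that `ℤ_[p]` has measure `1`. -/
def padicHaar (p : ℕ) [Fact p.Prime] : Measure ℚ_[p] :=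
  Measure.addHaarMeasure (padicBall p)

instance padicHaarSF (p : ℕ) [Fact p.Prime] : SigmaFinite (padicHaar p) := by
  unfold padicHaar; infer_instance

/-- The product of normalized Haar measures on a finite power of `ℚ_[p]`. -/
def padicPi (p : ℕ) [Fact p.Prime] (ι : Type) [Fintype ι] : Measure (ι → ℚ_[p]) :=
  Measure.pi fun _ => padicHaar p

/-- `T = {2, …, N-2}`. -/
def Tset (N : ℕ) : Finset ℕ := Finset.Icc 2 (N - 2)

/-- The ordered pairs `(i, j)` with `i < j` and `i, j ∈ A`. -/
def pairsIn (A : Finset ℕ) : Finset (ℕ × ℕ) := (A ×ˢ A).filter fun q => q.1 < q.2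

/-- The coordinates of a point of `ℚ_p^A`, as a function on `ℕ` (junk value `0` off `A`). -/
def padicCoord {p : ℕ} [Fact p.Prime] {A : Finset ℕ} (x : A → ℚ_[p]) (n : ℕ) : ℚ_[p] :=
  if h : n ∈ A then x ⟨n, h⟩ else 0

/-- The set of indices occurring in a set of pairs. -/
def Klist (K : Finset (ℕ × ℕ)) : Finset ℕ := K.image Prod.fst ∪ K.image Prod.snd

/-- `K(b̄) = {(i,j) ∈ T_J : b̄_i = b̄_j}` for a vector `b̄ ∈ 𝔽_p^J`. -/
def KofV (p : ℕ) (J : Finset ℕ) (b : J → ZMod p) : Finset (ℕ × ℕ) :=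
  (pairsIn J).filter fun q =>
    (if h : q.1 ∈ J then b ⟨q.1, h⟩ else 0) = if h : q.2 ∈ J then b ⟨q.2, h⟩ else 0

/-- `L₀(s; J) = ∫_{(ℤ_p^×)^{|J|}} ∏_{i<j ∈ J} |x_i - x_j|^{s_{ij}} ∏ dx_i`. -/
def L0val (p : ℕ) [Fact p.Prime] (s : ℕ → ℕ → ℂ) (J : Finset ℕ) : ℂ :=
  ∫ x in {x : ↥J → ℚ_[p] | (∀ i, ‖x i‖ = 1) ∧
      ∀ q ∈ pairsIn J, padicCoord x q.1 ≠ padicCoord x q.2},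
    ∏ q ∈ pairsIn J, (‖padicCoord x q.1 - padicCoord x q.2‖ : ℂ) ^ s q.1 q.2
    ∂(padicPi p ↥J)

/-- `L₁(s; J, K) = ∫_{ℤ_p^{|J|}} ∏_{(i,j) ∈ K} |x_i - x_j|^{s_{ij}} ∏ dx_i`. -/
def L1val (p : ℕ) [Fact p.Prime] (s : ℕ → ℕ → ℂ) (J : Finset ℕ)
    (K : Finset (ℕ × ℕ)) : ℂ :=
  ∫ x in {x : ↥J → ℚ_[p] | (∀ i, ‖x i‖ ≤ 1) ∧
      ∀ q ∈ K, padicCoord x q.1 ≠ padicCoord x q.2},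
    ∏ q ∈ K, (‖padicCoord x q.1 - padicCoord x q.2‖ : ℂ) ^ s q.1 q.2
    ∂(padicPi p ↥J)
/-- The residue class of `a`, that is, the set of `x ∈ ℤ_p` reducing to `a` modulo `p`. -/
def residueDisc (p : ℕ) [Fact p.Prime] (a : ZMod p) : Set ℚ_[p] := {x | ‖x - (a.val : ℚ_[p])‖ < 1}

/-- The polydisc of vectors of `ℤ_p^ι` reducing to `b` modulo `p`. -/
def residuePolydisc (p : ℕ) [Fact p.Prime] {ι : Type} (b : ι → ZMod p) : Set (ι → ℚ_[p]) :=
  Set.univ.pi fun i => residueDisc p (b i)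

/-- The unit polydisc `ℤ_p^ι`. -/
def unitPolydisc (p : ℕ) [Fact p.Prime] (ι : Type) : Set (ι → ℚ_[p]) :=
  Set.univ.pi fun _ => Metric.closedBall 0 1

/-- The integrand `∏_{(i,j) ∈ K} |x_i - x_j|^{s_{ij}}`. -/
def diffProd {p : ℕ} [Fact p.Prime] (s : ℕ → ℕ → ℂ) {A : Finset ℕ} (K : Finset (ℕ × ℕ))
    (x : A → ℚ_[p]) : ℂ :=
  ∏ q ∈ K, (‖padicCoord x q.1 - padicCoord x q.2‖ : ℂ) ^ s q.1 q.2

section Residue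

variable {p : ℕ} [Fact p.Prime]

theorem norm_val_sub_val_eq_one {a b : ZMod p} (h : a ≠ b) :
    ‖(a.val : ℚ_[p]) - (b.val : ℚ_[p])‖ = 1 := by
  have hcast : (a.val : ℚ_[p]) - (b.val : ℚ_[p]) = (((a.val : ℤ) - (b.val : ℤ) : ℤ) : ℚ_[p]) := by
    push_cast; rfl
  rw [hcast]
  refine le_antisymm (Padic.norm_int_le_one _) (not_lt.mp fun hlt => h ?_)
  rw [Padic.norm_intCast_lt_one_iff, ← ZMod.intCast_zmod_eq_zero_iff_dvd] at hlt
  simpa [sub_eq_zero] using hlt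

theorem norm_sub_eq_one_of_mem_residueDisc {a b : ZMod p} (h : a ≠ b) {x y : ℚ_[p]}
    (hx : x ∈ residueDisc p a) (hy : y ∈ residueDisc p b) : ‖x - y‖ = 1 := by
  have hlt : ‖(x - a.val) - (y - b.val)‖ < 1 := by
    rw [sub_eq_add_neg]
    refine (IsUltrametricDist.norm_add_le_max _ _).trans_lt (max_lt hx ?_)
    rw [norm_neg]
    exact hy
  have hsplit : x - y = ((x - a.val) - (y - b.val)) + ((a.val : ℚ_[p]) - b.val) := by ring
  rw [hsplit, IsUltrametricDist.norm_add_eq_max_of_norm_ne_norm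
    (by rw [norm_val_sub_val_eq_one h]; exact hlt.ne), norm_val_sub_val_eq_one h,
    max_eq_right hlt.le]

theorem residueDisc_disjoint {a b : ZMod p} (h : a ≠ b) :
    Disjoint (residueDisc p a) (residueDisc p b) := by
  refine Set.disjoint_left.mpr fun x hx hy => ?_
  simpa using norm_sub_eq_one_of_mem_residueDisc h hx hy

theorem exists_mem_residueDisc {x : ℚ_[p]} (hx : ‖x‖ ≤ 1) : ∃ a, x ∈ residueDisc p a := by
  obtain ⟨z, rfl⟩ : ∃ z : ℤ_[p], (z : ℚ_[p]) = x := ⟨⟨x, hx⟩, rfl⟩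
  refine ⟨(PadicInt.zmodRepr z : ZMod p), ?_⟩
  change ‖_‖ < 1
  rw [ZMod.val_cast_of_lt (PadicInt.zmodRepr_lt_p z)]
  simpa [PadicInt.norm_def] using PadicInt.norm_sub_zmodRepr_lt_one z

theorem norm_le_one_of_mem_residueDisc {a : ZMod p} {x : ℚ_[p]} (hx : x ∈ residueDisc p a) :
    ‖x‖ ≤ 1 := by
  have h := IsUltrametricDist.norm_add_le_max (x - a.val) (a.val : ℚ_[p])
  rw [sub_add_cancel] at h
  exact h.trans (max_le (le_of_lt hx) (by simpa using Padic.norm_int_le_one (p := p) a.val))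

theorem norm_eq_one_iff_of_mem_residueDisc {a : ZMod p} {x : ℚ_[p]} (hx : x ∈ residueDisc p a) :
    ‖x‖ = 1 ↔ a ≠ 0 := by
  refine ⟨?_, fun h => ?_⟩
  · rintro h rfl
    simp [residueDisc, h] at hx
  · simpa using norm_sub_eq_one_of_mem_residueDisc h hx
      (show (0 : ℚ_[p]) ∈ residueDisc p 0 by simp [residueDisc])

theorem norm_prime_mul_lt_one_iff (y : ℚ_[p]) : ‖(p : ℚ_[p]) * y‖ < 1 ↔ ‖y‖ ≤ 1 := by
  have hp : (0 : ℝ) < p := by exact_mod_cast (Fact.out : p.Prime).pos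
  have h := Padic.norm_le_pow_iff_norm_lt_pow_add_one y 0
  simp only [zpow_zero, zero_add, zpow_one] at h
  rw [h, norm_mul, Padic.norm_p, inv_mul_lt_iff₀ hp, mul_one]

theorem isOpen_residueDisc (a : ZMod p) : IsOpen (residueDisc p a) :=
  isOpen_lt (by fun_prop) continuous_const

theorem closedBall_eq_iUnion_residueDisc :
    Metric.closedBall (0 : ℚ_[p]) 1 = ⋃ a, residueDisc p a := by
  ext x
  simp only [mem_closedBall_zero_iff, Set.mem_iUnion]
  exact ⟨exists_mem_residueDisc, fun ⟨_, h⟩ => norm_le_one_of_mem_residueDisc h⟩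

end Residue

section Haar

variable (p : ℕ) [Fact p.Prime]

instance : (padicHaar p).IsAddHaarMeasure := by
  unfold padicHaar; infer_instance

instance (ι : Type) [Fintype ι] : (padicPi p ι).IsAddHaarMeasure := by
  unfold padicPi; infer_instance

theorem padicHaar_closedBall : padicHaar p (Metric.closedBall 0 1) = 1 :=
  Measure.addHaarMeasure_self

theorem padicHaar_residueDisc (a : ZMod p) : padicHaar p (residueDisc p a) = (p : ENNReal)⁻¹ := by
  have htrans (b : ZMod p) :
      padicHaar p (residueDisc p b) = padicHaar p (Metric.ball 0 1) := by
    rw [← measure_preimage_add_right (padicHaar p) (-(b.val : ℚ_[p])) (Metric.ball 0 1)]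
    congr 1
    ext x
    simp [residueDisc, ← sub_eq_add_neg, dist_eq_norm]
  have hsum := padicHaar_closedBall p
  rw [closedBall_eq_iUnion_residueDisc, measure_iUnion (fun _ _ h => residueDisc_disjoint h)
    (fun a => (isOpen_residueDisc a).measurableSet), tsum_fintype] at hsum
  simp only [htrans, sum_const, card_univ, ZMod.card, nsmul_eq_mul] at hsum
  rw [htrans]
  exact ENNReal.eq_inv_of_mul_eq_one_left (by rwa [mul_comm])

variable (ι : Type)

theorem padicPi_unitPolydisc [Fintype ι] : padicPi p ι (unitPolydisc p ι) = 1 := by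
  simp [padicPi, unitPolydisc, Measure.pi_pi, padicHaar_closedBall]

variable {ι}

theorem padicPi_residuePolydisc [Fintype ι] (b : ι → ZMod p) :
    padicPi p ι (residuePolydisc p b) = (p : ENNReal)⁻¹ ^ Fintype.card ι := by
  simp [padicPi, residuePolydisc, Measure.pi_pi, padicHaar_residueDisc]

theorem measurableSet_residuePolydisc [Fintype ι] (b : ι → ZMod p) : MeasurableSet (residuePolydisc p b) :=
  MeasurableSet.univ_pi fun i => (isOpen_residueDisc (b i)).measurableSet

/-- The affine homeomorphism `y ↦ p y + b`, which carries `ℤ_p^ι` onto the polydisc of `b`. -/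
def residueChart (b : ι → ZMod p) : (ι → ℚ_[p]) ≃ₜ (ι → ℚ_[p]) :=
  (Homeomorph.smulOfNeZero (p : ℚ_[p])
    (by exact_mod_cast (Fact.out : p.Prime).ne_zero)).trans
    (Homeomorph.addRight fun i => ((b i).val : ℚ_[p]))

theorem residueChart_apply (b : ι → ZMod p) (y : ι → ℚ_[p]) (i : ι) :
    residueChart p b y i = p * y i + (b i).val := rfl

theorem residueChart_preimage (b : ι → ZMod p) :
    residueChart p b ⁻¹' residuePolydisc p b = unitPolydisc p ι := by
  ext y
  simp [residuePolydisc, unitPolydisc, residueDisc, residueChart_apply,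
    ← norm_prime_mul_lt_one_iff]

theorem map_residueChart [Fintype ι] (b : ι → ZMod p) :
    (padicPi p ι).map (residueChart p b) = (p : ENNReal) ^ Fintype.card ι • padicPi p ι := by
  have hp0 : (p : ℚ_[p]) ≠ 0 := by exact_mod_cast (Fact.out : p.Prime).ne_zero
  obtain ⟨c, hc⟩ : ∃ c : ENNReal,
      (padicPi p ι).map (residueChart p b) = c • padicPi p ι := by
    let e : (ι → ℚ_[p]) ≃ₜ+ (ι → ℚ_[p]) :=
      { DistribMulAction.toAddEquiv (ι → ℚ_[p]) (Units.mk0 (p : ℚ_[p]) hp0) with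
        continuous_toFun := continuous_const_smul (Units.mk0 (p : ℚ_[p]) hp0)
        continuous_invFun := continuous_const_smul (Units.mk0 (p : ℚ_[p]) hp0)⁻¹ }
    have hcomp : (residueChart p b : (ι → ℚ_[p]) → (ι → ℚ_[p])) =
        (· + fun i => ((b i).val : ℚ_[p])) ∘ e := rfl
    have : ((padicPi p ι).map (residueChart p b)).IsAddHaarMeasure := by
      rw [hcomp, ← Measure.map_map (measurable_add_const _)
        (show Measurable (e : (ι → ℚ_[p]) → (ι → ℚ_[p])) from e.continuous_toFun.measurable)]
      infer_instance
    exact ⟨_, Measure.isAddLeftInvariant_eq_smul _ _⟩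
  have heval := congrArg (fun m => m (residuePolydisc p b)) hc
  simp only [Measure.smul_apply, smul_eq_mul] at heval
  rw [Measure.map_apply (residueChart p b).continuous.measurable
    (measurableSet_residuePolydisc p b), residueChart_preimage, padicPi_unitPolydisc,
    padicPi_residuePolydisc] at heval
  rw [hc, ENNReal.eq_inv_of_mul_eq_one_left heval.symm, ENNReal.inv_pow, inv_inv]

theorem setIntegral_residuePolydisc [Fintype ι] (b : ι → ZMod p) (f : (ι → ℚ_[p]) → ℂ) :
    ∫ x in residuePolydisc p b, f x ∂padicPi p ι =
      (p : ℂ) ^ (-(Fintype.card ι : ℂ)) *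
        ∫ y in unitPolydisc p ι, f (residueChart p b y) ∂padicPi p ι := by
  have hp0 : (p : ℂ) ≠ 0 := by exact_mod_cast (Fact.out : p.Prime).ne_zero
  rw [← residueChart_preimage p b,
    ← (residueChart p b).measurableEmbedding.setIntegral_map, map_residueChart,
    Measure.restrict_smul, integral_smul_measure, Complex.cpow_neg, Complex.cpow_natCast]
  simp only [ENNReal.toReal_pow, ENNReal.toReal_natCast, Complex.real_smul, Complex.ofReal_pow,
    Complex.ofReal_natCast]
  rw [inv_mul_cancel_left₀ (pow_ne_zero _ hp0)]

end Haar

section Integrand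

variable {p : ℕ} [Fact p.Prime] {s : ℕ → ℕ → ℂ} {A : Finset ℕ} {K : Finset (ℕ × ℕ)}

theorem mem_unitPolydisc {ι : Type} {x : ι → ℚ_[p]} : x ∈ unitPolydisc p ι ↔ ∀ i, ‖x i‖ ≤ 1 := by
  simp [unitPolydisc]

theorem padicCoord_of_mem (x : A → ℚ_[p]) {n : ℕ} (h : n ∈ A) : padicCoord x n = x ⟨n, h⟩ :=
  dif_pos h

theorem norm_padicCoord_le_one {x : A → ℚ_[p]} (hx : x ∈ unitPolydisc p A) (n : ℕ) :
    ‖padicCoord x n‖ ≤ 1 := by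
  unfold padicCoord
  split_ifs with h
  · exact mem_unitPolydisc.mp hx _
  · simp

theorem measurable_padicCoord (n : ℕ) : Measurable fun x : A → ℚ_[p] => padicCoord x n := by
  unfold padicCoord
  split_ifs with h
  · exact measurable_pi_apply _
  · exact measurable_const

theorem measurable_diffProd : Measurable (diffProd (p := p) (A := A) s K) :=
  Finset.measurable_fun_prod _ fun q _ =>
    (Complex.measurable_ofReal.comp
      ((measurable_padicCoord q.1).sub (measurable_padicCoord q.2)).norm).pow_const _

theorem diffProd_eq_zero (hs : ∀ q ∈ K, 0 < (s q.1 q.2).re) {x : A → ℚ_[p]} {q : ℕ × ℕ}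
    (hq : q ∈ K) (hx : padicCoord x q.1 = padicCoord x q.2) : diffProd s K x = 0 := by
  refine Finset.prod_eq_zero hq ?_
  have hne : s q.1 q.2 ≠ 0 := fun h => by simpa [h] using hs q hq
  simp [hx, hne]

theorem norm_diffProd_le_one (hs : ∀ q ∈ K, 0 < (s q.1 q.2).re) {x : A → ℚ_[p]}
    (hx : x ∈ unitPolydisc p A) : ‖diffProd s K x‖ ≤ 1 := by
  rw [diffProd, norm_prod]
  refine Finset.prod_le_one (fun _ _ => norm_nonneg _) fun q hq => ?_
  rw [Complex.norm_cpow_eq_rpow_re_of_nonneg (norm_nonneg _) (hs q hq).ne']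
  refine Real.rpow_le_one (norm_nonneg _) ?_ (hs q hq).le
  rw [sub_eq_add_neg]
  refine (IsUltrametricDist.norm_add_le_max _ _).trans (max_le (norm_padicCoord_le_one hx _) ?_)
  rw [norm_neg]
  exact norm_padicCoord_le_one hx _

theorem measurableSet_unitPolydisc {ι : Type} [Fintype ι] :
    MeasurableSet (unitPolydisc p ι) :=
  MeasurableSet.univ_pi fun _ => Metric.isClosed_closedBall.measurableSet

theorem integrableOn_diffProd (hs : ∀ q ∈ K, 0 < (s q.1 q.2).re) :
    IntegrableOn (diffProd s K) (unitPolydisc p A) (padicPi p A) := by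
  refine IntegrableOn.of_bound (by simp [padicPi_unitPolydisc])
    measurable_diffProd.aestronglyMeasurable 1 ?_
  exact (ae_restrict_mem measurableSet_unitPolydisc).mono fun x hx => norm_diffProd_le_one hs hx

theorem L1val_eq (hs : ∀ q ∈ K, 0 < (s q.1 q.2).re) :
    L1val p s A K = ∫ x in unitPolydisc p A, diffProd s K x ∂padicPi p A := by
  refine (setIntegral_eq_of_subset_of_forall_sdiff_eq_zero measurableSet_unitPolydisc
    (fun x hx => mem_unitPolydisc.mpr hx.1) fun x hx => ?_).symm
  obtain ⟨q, hq, hxq⟩ : ∃ q ∈ K, padicCoord x q.1 = padicCoord x q.2 := by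
    by_contra! h
    exact hx.2 ⟨mem_unitPolydisc.mp hx.1, h⟩
  exact diffProd_eq_zero hs hq hxq

theorem measurableSet_forall_norm_eq_one :
    MeasurableSet {x : A → ℚ_[p] | ∀ i, ‖x i‖ = 1} := by
  have h : {x : A → ℚ_[p] | ∀ i, ‖x i‖ = 1} = Set.univ.pi fun _ => Metric.sphere 0 1 := by
    ext x; simp
  rw [h]
  exact MeasurableSet.univ_pi fun _ => Metric.isClosed_sphere.measurableSet

theorem L0val_eq (hs : ∀ q ∈ pairsIn A, 0 < (s q.1 q.2).re) :
    L0val p s A =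
      ∫ x in {x : A → ℚ_[p] | ∀ i, ‖x i‖ = 1}, diffProd s (pairsIn A) x ∂padicPi p A := by
  refine (setIntegral_eq_of_subset_of_forall_sdiff_eq_zero measurableSet_forall_norm_eq_one
    (fun x hx => hx.1) fun x hx => ?_).symm
  obtain ⟨q, hq, hxq⟩ : ∃ q ∈ pairsIn A, padicCoord x q.1 = padicCoord x q.2 := by
    by_contra! h
    exact hx.2 ⟨hx.1, h⟩
  exact diffProd_eq_zero hs hq hxq

/-- Integrating out the coordinates on which the integrand does not depend. -/
theorem setIntegral_diffProd_of_subset {B : Finset ℕ} (hBA : B ⊆ A) (hK : Klist K ⊆ B) :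
    ∫ x in unitPolydisc p A, diffProd s K x ∂padicPi p A =
      ∫ x in unitPolydisc p B, diffProd s K x ∂padicPi p B := by
  have : IsProbabilityMeasure ((padicHaar p).restrict (Metric.closedBall 0 1)) :=
    ⟨by rw [Measure.restrict_apply_univ, padicHaar_closedBall]⟩
  have hmap := isProjectiveMeasureFamily_pi
    (fun _ : ℕ => (padicHaar p).restrict (Metric.closedBall 0 1)) A B hBA
  simp only [← Measure.restrict_pi_pi] at hmap
  have hrestrict (x : A → ℚ_[p]) : diffProd s K x =
      diffProd s K (Finset.restrict₂ (π := fun _ : ℕ => ℚ_[p]) hBA x) := by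
    refine Finset.prod_congr rfl fun q hq => ?_
    have h₁ : q.1 ∈ B := hK (mem_union_left _ (mem_image_of_mem _ hq))
    have h₂ : q.2 ∈ B := hK (mem_union_right _ (mem_image_of_mem _ hq))
    rw [padicCoord_of_mem x (hBA h₁), padicCoord_of_mem x (hBA h₂), padicCoord_of_mem _ h₁,
      padicCoord_of_mem _ h₂]
    rfl
  simp only [unitPolydisc, padicPi]
  rw [hmap, integral_map
    (Finset.measurable_restrict₂ (X := fun _ : ℕ => ℚ_[p]) hBA).aemeasurable
    measurable_diffProd.aestronglyMeasurable]
  simp only [hrestrict]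

end Integrand

section Decomposition

variable {p : ℕ} {J : Finset ℕ}

theorem mem_pairsIn {A : Finset ℕ} {q : ℕ × ℕ} :
    q ∈ pairsIn A ↔ (q.1 ∈ A ∧ q.2 ∈ A) ∧ q.1 < q.2 := by
  simp [pairsIn]

theorem KofV_subset (b : J → ZMod p) : KofV p J b ⊆ pairsIn J := filter_subset _ _

theorem mem_KofV {b : J → ZMod p} {q : ℕ × ℕ} (h₁ : q.1 ∈ J) (h₂ : q.2 ∈ J) :
    q ∈ KofV p J b ↔ q ∈ pairsIn J ∧ b ⟨q.1, h₁⟩ = b ⟨q.2, h₂⟩ := by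
  simp [KofV, h₁, h₂]

theorem Klist_KofV_subset (b : J → ZMod p) : Klist (KofV p J b) ⊆ J := by
  intro n hn
  simp only [Klist, mem_union, mem_image] at hn
  rcases hn with ⟨q, hq, rfl⟩ | ⟨q, hq, rfl⟩
  · exact (mem_pairsIn.mp (KofV_subset b hq)).1.1
  · exact (mem_pairsIn.mp (KofV_subset b hq)).1.2

theorem KofV_eq_empty {b : J → ZMod p} (hb : Function.Injective b) : KofV p J b = ∅ := by
  refine Finset.eq_empty_of_forall_notMem fun q hq => ?_
  obtain ⟨⟨h₁, h₂⟩, hlt⟩ := mem_pairsIn.mp (KofV_subset b hq)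
  exact hlt.ne (congrArg Subtype.val (hb ((mem_KofV h₁ h₂).mp hq).2))

variable [Fact p.Prime] {s : ℕ → ℕ → ℂ}

theorem ofReal_norm_prime_mul_cpow (y : ℚ_[p]) (t : ℂ) :
    (‖(p : ℚ_[p]) * y‖ : ℂ) ^ t = (p : ℂ) ^ (-t) * (‖y‖ : ℂ) ^ t := by
  rw [norm_mul, Complex.ofReal_mul, Complex.mul_cpow_ofReal_nonneg (norm_nonneg _) (norm_nonneg _),
    Padic.norm_p, Complex.ofReal_inv, Complex.ofReal_natCast, Complex.inv_cpow _ _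
      (by rw [Complex.natCast_arg]; exact Real.pi_pos.ne), Complex.cpow_neg]

theorem diffProd_residueChart (b : J → ZMod p) {y : J → ℚ_[p]} (hy : y ∈ unitPolydisc p J) :
    diffProd s (pairsIn J) (residueChart p b y) =
      (p : ℂ) ^ (-∑ q ∈ KofV p J b, s q.1 q.2) * diffProd s (KofV p J b) y := by
  have hp0 : (p : ℂ) ≠ 0 := by exact_mod_cast (Fact.out : p.Prime).ne_zero
  have hmem : residueChart p b y ∈ residuePolydisc p b := by
    rwa [← residueChart_preimage p b] at hy
  have hpow : (p : ℂ) ^ (-∑ q ∈ KofV p J b, s q.1 q.2) =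
      ∏ q ∈ KofV p J b, (p : ℂ) ^ (-s q.1 q.2) := by
    simp only [Complex.cpow_def_of_ne_zero hp0, ← Complex.exp_sum, ← Finset.mul_sum,
      Finset.sum_neg_distrib]
  rw [hpow, diffProd, diffProd, ← Finset.prod_mul_distrib,
    ← Finset.prod_subset (KofV_subset b)]
  · refine Finset.prod_congr rfl fun q hq => ?_
    obtain ⟨⟨h₁, h₂⟩, -⟩ := mem_pairsIn.mp (KofV_subset b hq)
    rw [← ofReal_norm_prime_mul_cpow, padicCoord_of_mem _ h₁, padicCoord_of_mem _ h₂,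
      padicCoord_of_mem _ h₁, padicCoord_of_mem _ h₂, residueChart_apply, residueChart_apply,
      ((mem_KofV h₁ h₂).mp hq).2, add_sub_add_right_eq_sub, mul_sub]
  · intro q hq hqK
    obtain ⟨⟨h₁, h₂⟩, -⟩ := mem_pairsIn.mp hq
    have hne : b ⟨q.1, h₁⟩ ≠ b ⟨q.2, h₂⟩ := fun h => hqK ((mem_KofV h₁ h₂).mpr ⟨hq, h⟩)
    rw [padicCoord_of_mem _ h₁, padicCoord_of_mem _ h₂,
      norm_sub_eq_one_of_mem_residueDisc hne (hmem _ trivial) (hmem _ trivial),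
      Complex.ofReal_one, Complex.one_cpow]

theorem setIntegral_residuePolydisc_diffProd (hs : ∀ q ∈ pairsIn J, 0 < (s q.1 q.2).re)
    (b : J → ZMod p) :
    ∫ x in residuePolydisc p b, diffProd s (pairsIn J) x ∂padicPi p J =
      (p : ℂ) ^ (-(J.card : ℂ) - ∑ q ∈ KofV p J b, s q.1 q.2) *
        L1val p s (Klist (KofV p J b)) (KofV p J b) := by
  have hp0 : (p : ℂ) ≠ 0 := by exact_mod_cast (Fact.out : p.Prime).ne_zero
  rw [setIntegral_residuePolydisc, setIntegral_congr_fun measurableSet_unitPolydisc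
    (fun y hy => diffProd_residueChart b hy), integral_const_mul,
    setIntegral_diffProd_of_subset (Klist_KofV_subset b) subset_rfl,
    L1val_eq fun q hq => hs q (KofV_subset b hq), sub_eq_add_neg, Complex.cpow_add _ _ hp0,
    Fintype.card_coe, mul_assoc]

theorem L1val_Klist_empty : L1val p s (Klist ∅) ∅ = 1 := by
  rw [L1val_eq (by simp)]
  simp [diffProd, Measure.real, padicPi_unitPolydisc]

theorem forall_norm_eq_one_eq_biUnion :
    {x : J → ℚ_[p] | ∀ i, ‖x i‖ = 1} =
      ⋃ b ∈ (univ.filter fun b : J → ZMod p => ∀ i, b i ≠ 0), residuePolydisc p b := by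
  ext x
  simp only [mem_filter_univ, Set.mem_iUnion, exists_prop]
  constructor
  · intro hx
    choose b hb using fun i => exists_mem_residueDisc (hx i).le
    exact ⟨b, fun i => (norm_eq_one_iff_of_mem_residueDisc (hb i)).mp (hx i), fun i _ => hb i⟩
  · rintro ⟨b, hb, hx⟩ i
    exact (norm_eq_one_iff_of_mem_residueDisc (hx i trivial)).mpr (hb i)

theorem residuePolydisc_disjoint {ι : Type} {a b : ι → ZMod p} (h : a ≠ b) :
    Disjoint (residuePolydisc p a) (residuePolydisc p b) := by
  obtain ⟨i, hi⟩ := Function.ne_iff.mp h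
  exact Set.disjoint_left.mpr fun x hx hy =>
    Set.disjoint_left.mp (residueDisc_disjoint hi) (hx i trivial) (hy i trivial)

theorem L0val_eq_sum (hs : ∀ q ∈ pairsIn J, 0 < (s q.1 q.2).re) :
    L0val p s J = ∑ b : J → ZMod p with ∀ i, b i ≠ 0,
      (p : ℂ) ^ (-(J.card : ℂ) - ∑ q ∈ KofV p J b, s q.1 q.2) *
        L1val p s (Klist (KofV p J b)) (KofV p J b) := by
  rw [L0val_eq hs, forall_norm_eq_one_eq_biUnion, integral_biUnion_finset]
  · exact Finset.sum_congr rfl fun b _ => setIntegral_residuePolydisc_diffProd hs b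
  · exact fun b _ => measurableSet_residuePolydisc p b
  · exact fun a _ b _ h => residuePolydisc_disjoint h
  · refine fun b _ => (integrableOn_diffProd hs).mono_set fun x hx => ?_
    exact mem_unitPolydisc.mpr fun i => norm_le_one_of_mem_residueDisc (hx i trivial)

end Decomposition

/-- A sum of a function of `k b` over `S`, grouped along a system `R` of representatives of the
fibres of `k` on `S`. -/
theorem sum_eq_sum_representatives {α β : Type*} [Fintype α] [DecidableEq β] (k : α → β)
    (S : α → Prop) [DecidablePred S] (R : Finset α) (hRS : ∀ r ∈ R, S r)
    (hR : ∀ b, S b → ∃! r, r ∈ R ∧ k r = k b) (g : β → ℂ) :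
    ∑ b with S b, g (k b) = ∑ a ∈ R, ({b | S b ∧ k b = k a}.ncard : ℂ) * g (k a) := by
  have hinj : Set.InjOn k R := fun r hr r' hr' h =>
    (hR r' (hRS r' hr')).unique ⟨hr, h⟩ ⟨hr', rfl⟩
  have hmaps : ∀ b ∈ univ.filter S, k b ∈ R.image k := fun b hb => by
    obtain ⟨r, ⟨hr, hrb⟩, -⟩ := hR b (mem_filter.mp hb).2
    exact mem_image.mpr ⟨r, hr, hrb⟩
  rw [← Finset.sum_fiberwise_of_maps_to hmaps, Finset.sum_image hinj]
  refine Finset.sum_congr rfl fun a _ => ?_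
  rw [Finset.sum_congr rfl (g := fun _ => g (k a))
    (fun b hb => by rw [(mem_filter.mp hb).2]), Finset.sum_const, nsmul_eq_mul, filter_filter,
    ← Set.ncard_coe_finset, coe_filter_univ]


/-- Lemma: `L₀(s;J) = Σ_{ā ∈ R(J)} |Ā(ā)| p^{-|J| - Σ_{K(ā)} s_{ij}} L₁(s; K_list(ā), K(ā))
 + |Δ̄(J)| p^{-|J|}`, for any system `R(J)` of representatives of the classes of the
relation `ā ∼ b̄ ↔ K(ā) = K(b̄)` on `(𝔽_p^×)^{|J|} ∖ Δ̄(J)`. -/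
theorem L0_formula (p : ℕ) [Fact p.Prime] (N : ℕ) (hN : 4 ≤ N)
    (J : Finset ℕ) (hJT : J ⊆ Tset N) (hJ2 : 2 ≤ J.card)
    (s : ℕ → ℕ → ℂ) (hs : ∀ q ∈ pairsIn J, 0 < (s q.1 q.2).re)
    (R : Finset (↥J → ZMod p))
    (hR1 : ∀ r ∈ R, (∀ i, r i ≠ 0) ∧ ¬ Function.Injective r)
    (hR2 : ∀ b : ↥J → ZMod p, ((∀ i, b i ≠ 0) ∧ ¬ Function.Injective b) →
      ∃! r, r ∈ R ∧ KofV p J r = KofV p J b) :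
    L0val p s J =
      (∑ a ∈ R,
        ({b : ↥J → ZMod p | ((∀ i, b i ≠ 0) ∧ ¬ Function.Injective b) ∧
            KofV p J b = KofV p J a}.ncard : ℂ) *
          (p : ℂ) ^ (-(J.card : ℂ) - ∑ q ∈ KofV p J a, s q.1 q.2) *
          L1val p s (Klist (KofV p J a)) (KofV p J a)) +
      ({b : ↥J → ZMod p | (∀ i, b i ≠ 0) ∧ Function.Injective b}.ncard : ℂ) *
        (p : ℂ) ^ (-(J.card : ℂ)) := by
  classical
  rw [L0val_eq_sum hs, ← Finset.sum_filter_add_sum_filter_not _ Function.Injective, add_comm,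
    filter_filter, filter_filter]
  congr 1
  · simp only [mul_assoc]
    exact sum_eq_sum_representatives (KofV p J)
      (fun b => (∀ i, b i ≠ 0) ∧ ¬ Function.Injective b) R hR1 hR2
      fun K => (p : ℂ) ^ (-(J.card : ℂ) - ∑ q ∈ K, s q.1 q.2) * L1val p s (Klist K) K
  · rw [Finset.sum_congr rfl (g := fun _ => (p : ℂ) ^ (-(J.card : ℂ))), Finset.sum_const,
      nsmul_eq_mul, ← Set.ncard_coe_finset, coe_filter_univ]
    intro b hb
    rw [KofV_eq_empty (mem_filter.mp hb).2.2, L1val_Klist_empty]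
    simp
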